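/- arXiv:2512.08642 — 2 statements merged into one kernel-verified Lean document; each statement's English description precedes it below -/
import Mathlib

section
/- Let Gr⟨2,3,5⟩ = ⟨a, b, c ∣ a² = b³, b³ = c⁵, c⁵ = abc⟩. The quotient of Gr⟨2,3,5⟩ by the normal closure of the image of a² is isomorphic to the alternating group A₅ (the alternating group on 5 letters). -/
/-!
The quotient is `⟨a, b, c ∣ a² = b³ = c⁵ = abc = 1⟩`, the `(2,3,5)` triangle group. It maps onto
`A₅` by `a ↦ (0 1)(2 3)`, `c ↦ (0 1 2 3 4)`, `b ↦ (c a)⁻¹`: the image contains elements of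
orders 2, 3 and 5, so it has index at most 2, and `A₅` has no subgroup of index 2 because it is
simple (`eq_top_of_orders`).

The map is injective because the quotient has at most 60 elements. Eliminating `b`, the relations
read `a² = c⁵ = (ca)³ = 1`, and a coset enumeration over `⟨c⟩` by hand shows that left
multiplication by `a` and `c` preserves the union of the 12 cosets of
`1`, `cⁱa`, `cⁱac²a`, `ac⁻²ac²a` (`normalForm_surjective`). Geometrically, these are the 12
vertices of the icosahedron, in layers by distance from a vertex fixed by `c`.
-/

/-- Relators of `Gr⟨2,3,5⟩ = ⟨a, b, c ∣ a² = b³, b³ = c⁵, c⁵ = abc⟩`,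
with `a = 0`, `b = 1`, `c = 2`. -/
def relsGr235 : Set (FreeGroup (Fin 3)) :=
  {FreeGroup.of 0 ^ 2 * (FreeGroup.of 1 ^ 3)⁻¹,
   FreeGroup.of 1 ^ 3 * (FreeGroup.of 2 ^ 5)⁻¹,
   FreeGroup.of 2 ^ 5 * (FreeGroup.of 0 * FreeGroup.of 1 * FreeGroup.of 2)⁻¹}

/-! ### Coset enumeration over `⟨c⟩` -/

/-- The normal forms `cʲ`, `cⁱacʲ`, `cⁱac²acʲ`, `ac⁻²ac²acʲ` with `i, j ∈ {0, …, 4}`; there are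
`5 + 25 + 25 + 5 = 60` of them. -/
def normalForm {G : Type*} [Group G] (a c : G) :
    Fin 5 ⊕ (Fin 5 × Fin 5) ⊕ (Fin 5 × Fin 5) ⊕ Fin 5 → G
  | .inl j => c ^ (j : ℕ)
  | .inr (.inl (i, j)) => c ^ (i : ℕ) * a * c ^ (j : ℕ)
  | .inr (.inr (.inl (i, j))) => c ^ (i : ℕ) * a * c ^ 2 * a * c ^ (j : ℕ)
  | .inr (.inr (.inr j)) => a * c ^ (-2 : ℤ) * a * c ^ 2 * a * c ^ (j : ℕ)

section Enumeration

variable {G : Type*} [Group G] {a c : G}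

lemma zpow_eq_fin_pow (hc : c ^ 5 = 1) (n : ℤ) : ∃ j : Fin 5, c ^ n = c ^ (j : ℕ) := by
  have h0 := Int.emod_nonneg n (show (5 : ℤ) ≠ 0 by norm_num)
  have h1 := Int.emod_lt_of_pos n (show (0 : ℤ) < 5 by norm_num)
  refine ⟨⟨(n % 5).toNat, by omega⟩, ?_⟩
  have h2 : (((n % 5).toNat : ℕ) : ℤ) = n % 5 := Int.toNat_of_nonneg h0
  have h5 : c ^ (5 : ℤ) = 1 := by exact_mod_cast hc
  rw [← zpow_natCast c, h2]
  conv_lhs => rw [← Int.mul_ediv_add_emod n 5, zpow_add, zpow_mul, h5, one_zpow, one_mul]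

/-- Membership in the set of normal forms, with integer exponents allowed. -/
lemma mem_range_normalForm (hc : c ^ 5 = 1) {x : G}
    (h : ∃ i j : ℤ, x = c ^ j ∨ x = c ^ i * a * c ^ j ∨ x = c ^ i * a * c ^ 2 * a * c ^ j ∨
      x = a * c ^ (-2 : ℤ) * a * c ^ 2 * a * c ^ j) :
    x ∈ Set.range (normalForm a c) := by
  obtain ⟨i, j, h⟩ := h
  obtain ⟨i', hi⟩ := zpow_eq_fin_pow hc i
  obtain ⟨j', hj⟩ := zpow_eq_fin_pow hc j
  rw [hi, hj] at h
  rcases h with h | h | h | h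
  · exact ⟨.inl j', h.symm⟩
  · exact ⟨.inr (.inl (i', j')), h.symm⟩
  · exact ⟨.inr (.inr (.inl (i', j'))), h.symm⟩
  · exact ⟨.inr (.inr (.inr j')), h.symm⟩

/-- The basic rewriting rule, equivalent to `(ca)³ = 1` when `a² = 1`. -/
lemma a_c_a (ha : a * a = 1) (h : c * a * (c * a) * (c * a) = 1) :
    a * c * a = c⁻¹ * a * c⁻¹ := by
  have ha' : a⁻¹ = a := inv_eq_of_mul_eq_one_right ha
  have h1 : c * (a * c * a) * (c * a) = 1 := by simpa only [mul_assoc] using h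
  have h2 := eq_inv_of_mul_eq_one_left h1
  rw [mul_inv_rev, ha'] at h2
  rw [mul_assoc c⁻¹, ← h2]; group

/-- The coset of `ac⁻²a` is that of `ac²a` moved by `c`; this is `aca · aca = ac²a` rewritten. -/
lemma a_c_inv_sq_a (ha : a * a = 1) (h : c * a * (c * a) * (c * a) = 1) :
    a * c ^ (-2 : ℤ) * a = c * a * c ^ 2 * a * c := by
  have k := a_c_a ha h
  have e : a * c ^ 2 * a = (a * c * a) * (a * c * a) := by
    rw [show (a * c * a) * (a * c * a) = a * c * (a * a) * c * a by group, ha, pow_two]; group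
  rw [k] at e
  rw [show c * a * c ^ 2 * a * c = c * (a * c ^ 2 * a) * c by group, e]; group

/-- `ac⁻²ac²a` represents the vertex antipodal to the one fixed by `c`: `c` fixes its coset. -/
lemma c_antipode (hc : c ^ 5 = 1) (ha : a * a = 1) (h : c * a * (c * a) * (c * a) = 1) :
    c * (a * c ^ (-2 : ℤ) * a * c ^ 2 * a) = a * c ^ (-2 : ℤ) * a * c ^ 2 * a * c⁻¹ := by
  have k := a_c_inv_sq_a ha h
  have c3 : c ^ 3 = c ^ (-2 : ℤ) := by
    calc c ^ 3 = c ^ (-2 : ℤ) * c ^ 5 := by group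
      _ = _ := by rw [hc, mul_one]
  have e : a * c ^ (-2 : ℤ) * a * c ^ 2 * a
      = c * (a * c ^ (-2 : ℤ) * a * c ^ 2 * a) * c := by
    calc a * c ^ (-2 : ℤ) * a * c ^ 2 * a
        = c * a * c ^ 2 * (a * c ^ 3 * a) := by rw [k]; group
      _ = c * a * c ^ 2 * (c * a * c ^ 2 * a * c) := by rw [c3, k]
      _ = c * (a * c ^ 3 * a * c ^ 2 * a) * c := by group
      _ = _ := by rw [c3]
  rw [eq_mul_inv_iff_mul_eq]; exact e.symm

lemma c_mul_normalForm (hc : c ^ 5 = 1) (ha : a * a = 1) (h : c * a * (c * a) * (c * a) = 1)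
    {x : G} (hx : x ∈ Set.range (normalForm a c)) : c * x ∈ Set.range (normalForm a c) := by
  apply mem_range_normalForm hc
  obtain ⟨j | ⟨i, j⟩ | ⟨i, j⟩ | j, rfl⟩ := hx <;> simp only [normalForm]
  · exact ⟨0, j + 1, .inl (by rw [zpow_add_one, zpow_natCast, ← pow_succ', pow_succ])⟩
  · exact ⟨1 + i, j, .inr (.inl (by rw [zpow_add]; simp [mul_assoc]))⟩
  · exact ⟨1 + i, j, .inr (.inr (.inl (by rw [zpow_add]; simp [mul_assoc])))⟩
  · refine ⟨0, -1 + j, .inr (.inr (.inr ?_))⟩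
    rw [← mul_assoc c, c_antipode hc ha h, zpow_add]
    simp [mul_assoc]

lemma a_mul_normalForm (hc : c ^ 5 = 1) (ha : a * a = 1) (h : c * a * (c * a) * (c * a) = 1)
    {x : G} (hx : x ∈ Set.range (normalForm a c)) : a * x ∈ Set.range (normalForm a c) := by
  have k1 := a_c_a ha h
  have k2 := a_c_inv_sq_a ha h
  have c3 : c ^ 3 = c ^ (-2 : ℤ) := by
    calc c ^ 3 = c ^ (-2 : ℤ) * c ^ 5 := by group
      _ = _ := by rw [hc, mul_one]
  have c4 : c ^ 4 = c⁻¹ := by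
    calc c ^ 4 = c⁻¹ * c ^ 5 := by group
      _ = _ := by rw [hc, mul_one]
  have ha' : a⁻¹ = a := inv_eq_of_mul_eq_one_right ha
  have k4 : a * c⁻¹ * a = c * a * c := by
    have := congrArg (·⁻¹) k1
    simpa [mul_assoc, ha'] using this
  have aa : ∀ y, a * (a * y) = y := fun y => by rw [← mul_assoc, ha, one_mul]
  apply mem_range_normalForm hc
  obtain ⟨j | ⟨i, j⟩ | ⟨i, j⟩ | j, rfl⟩ := hx <;> simp only [normalForm, ← zpow_natCast c j] <;>
    generalize ((j : ℕ) : ℤ) = n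
  · exact ⟨0, n, .inr (.inl (by simp))⟩
  · rw [show a * (c ^ (i : ℕ) * a * c ^ n) = a * c ^ (i : ℕ) * a * c ^ n by group]
    fin_cases i
    · exact ⟨0, n, .inl (by simp [ha])⟩
    · refine ⟨-1, -1 + n, .inr (.inl ?_)⟩
      simp only [pow_one, k1, zpow_add]; group
    · exact ⟨0, n, .inr (.inr (.inl (by simp)))⟩
    · refine ⟨1, 1 + n, .inr (.inr (.inl ?_))⟩
      simp only [c3, k2, zpow_add]; group
    · refine ⟨1, 1 + n, .inr (.inl ?_)⟩
      simp only [c4, k4, zpow_add]; group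
  · rw [show a * (c ^ (i : ℕ) * a * c ^ 2 * a * c ^ n)
      = a * c ^ (i : ℕ) * a * c ^ 2 * a * c ^ n by group]
    fin_cases i
    · exact ⟨2, n, .inr (.inl (by simp [ha]))⟩
    -- `a·cac²a = c⁻¹(aca) = c⁻²ac⁻¹`
    · refine ⟨-2, -1 + n, .inr (.inl ?_)⟩
      calc a * c ^ 1 * a * c ^ 2 * a * c ^ n = c⁻¹ * (a * c⁻¹ * c ^ 2 * a) * c ^ n := by
            rw [pow_one, k1]; group
        _ = c⁻¹ * (a * c * a) * c ^ n := by group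
        _ = _ := by rw [k1]; group
    -- `(ac²a)c²a = (c⁻¹ac⁻²ac⁻¹)c²a = c⁻¹ac⁻²(aca) = c⁻¹ac⁻³ac⁻¹`, and `c⁻³ = c²`
    · refine ⟨-1, -1 + n, .inr (.inr (.inl ?_))⟩
      have k3 : a * c ^ 2 * a = c⁻¹ * (a * c ^ (-2 : ℤ) * a) * c⁻¹ := by rw [k2]; group
      have c3' : c ^ (-3 : ℤ) = c ^ 2 := by
        calc c ^ (-3 : ℤ) = c ^ (-3 : ℤ) * c ^ 5 := by rw [hc, mul_one]
          _ = _ := by group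
      calc a * c ^ 2 * a * c ^ 2 * a * c ^ n
          = c⁻¹ * a * c ^ (-2 : ℤ) * (a * c * a) * c ^ n := by rw [k3]; group
        _ = c⁻¹ * a * c ^ (-3 : ℤ) * a * c⁻¹ * c ^ n := by rw [k1]; group
        _ = _ := by rw [c3']; group
    · exact ⟨0, n, .inr (.inr (.inr (by simp only [c3])))⟩
    -- `(ac⁻¹a)c²a = cac³a = c(ac⁻²a)`
    · refine ⟨2, 1 + n, .inr (.inr (.inl ?_))⟩
      calc a * c ^ 4 * a * c ^ 2 * a * c ^ n = c * (a * c ^ 3 * a) * c ^ n := by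
            rw [c4, k4]; group
        _ = (c * c) * a * c ^ 2 * a * c ^ (1 + n) := by rw [c3, k2]; group
        _ = _ := by rw [← pow_two, zpow_ofNat]
  · refine ⟨-2, n, .inr (.inr (.inl ?_))⟩
    simp only [mul_assoc, aa]

lemma normalForm_surjective (hc : c ^ 5 = 1) (ha : a * a = 1)
    (h : c * a * (c * a) * (c * a) = 1) (hgen : Subgroup.closure {a, c} = ⊤) :
    Function.Surjective (normalForm a c) := by
  have ha' : a⁻¹ = a := inv_eq_of_mul_eq_one_right ha
  have hc' : c⁻¹ = c * (c * (c * c)) := by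
    apply inv_eq_of_mul_eq_one_right
    rw [← hc]; simp only [pow_succ, pow_zero, one_mul, mul_assoc]
  intro x
  have hx : x ∈ Subgroup.closure {a, c} := hgen ▸ Subgroup.mem_top x
  induction hx using Subgroup.closure_induction_left with
  | one => exact ⟨.inl 0, by simp [normalForm]⟩
  | mul_left y hy z _ hz =>
    rcases hy with rfl | rfl
    · exact a_mul_normalForm hc ha h hz
    · exact c_mul_normalForm hc ha h hz
  | inv_mul_cancel y hy z _ hz =>
    rcases hy with rfl | rfl
    · rw [ha']; exact a_mul_normalForm hc ha h hz
    · have key := fun {w : G} => c_mul_normalForm (x := w) hc ha h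
      rw [hc']
      simp only [mul_assoc]
      exact key (key (key (key hz)))

end Enumeration

/-! ### The map onto `A₅` -/

lemma card_alternatingGroup_five : Nat.card (alternatingGroup (Fin 5)) = 60 := by
  have := two_mul_nat_card_alternatingGroup (α := Fin 5)
  rw [Nat.card_perm, Nat.card_fin] at this
  have h : Nat.factorial 5 = 120 := rfl
  omega

/-- A subgroup of `A₅` with elements of orders 2, 3 and 5 has index 1 or 2, and index 2 would make
it normal, against simplicity. -/
lemma eq_top_of_orders (H : Subgroup (alternatingGroup (Fin 5)))
    {x y z : alternatingGroup (Fin 5)} (hx : x ∈ H) (hy : y ∈ H) (hz : z ∈ H)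
    (ox : orderOf x = 2) (oy : orderOf y = 3) (oz : orderOf z = 5) : H = ⊤ := by
  have d2 : 2 ∣ Nat.card H := ox ▸ H.orderOf_dvd_natCard hx
  have d3 : 3 ∣ Nat.card H := oy ▸ H.orderOf_dvd_natCard hy
  have d5 : 5 ∣ Nat.card H := oz.symm.dvd.trans (H.orderOf_dvd_natCard hz)
  have hm := H.card_mul_index
  rw [card_alternatingGroup_five] at hm
  obtain ⟨m, hm'⟩ : 30 ∣ Nat.card H := by omega
  rw [hm', mul_assoc] at hm
  have hm2 : m * H.index = 2 := by omega
  have hi : H.index ∣ 2 := ⟨m, by rw [← hm2, mul_comm]⟩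
  rcases (Nat.dvd_prime Nat.prime_two).1 hi with h1 | h2
  · exact Subgroup.index_eq_one.1 h1
  · have := Subgroup.normal_of_index_eq_two h2
    have := alternatingGroup.isSimpleGroup (α := Fin 5) (by simp)
    rcases Subgroup.Normal.eq_bot_or_eq_top (H := H) inferInstance with h | h
    · rw [h, Subgroup.index_bot, card_alternatingGroup_five] at h2
      omega
    · exact h

/-- The involution `(0 1)(2 3)`. -/
def permA : alternatingGroup (Fin 5) :=
  ⟨Equiv.swap 0 1 * Equiv.swap 2 3, by rw [Equiv.Perm.mem_alternatingGroup]; decide⟩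

/-- The 5-cycle `(0 1 2 3 4)`. -/
def permC : alternatingGroup (Fin 5) :=
  ⟨finRotate 5, by rw [Equiv.Perm.mem_alternatingGroup]; decide⟩

lemma permA_sq : permA ^ 2 = 1 := by decide
lemma permC_pow : permC ^ 5 = 1 := by decide
lemma permC_permA_pow : (permC * permA) ^ 3 = 1 := by decide

/-- The assignment `a ↦ permA`, `b ↦ (permC * permA)⁻¹`, `c ↦ permC`. -/
def permGen : Fin 3 → alternatingGroup (Fin 5) := ![permA, (permC * permA)⁻¹, permC]

lemma permGen_rels : ∀ r ∈ relsGr235, FreeGroup.lift permGen r = 1 := by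
  rintro r (rfl | rfl | rfl)
  · simp only [map_mul, map_pow, map_inv, FreeGroup.lift_apply_of]
    simp [permGen, permA_sq, permC_permA_pow, -mul_inv_rev]
  · simp only [map_mul, map_pow, map_inv, FreeGroup.lift_apply_of]
    simp [permGen, permC_pow, permC_permA_pow, -mul_inv_rev]
  · simp only [map_mul, map_pow, map_inv, FreeGroup.lift_apply_of]
    simp [permGen, permC_pow]

/-- The map from the quotient to `A₅` induced by `permGen`. -/
def toA5 : (PresentedGroup relsGr235 ⧸
    Subgroup.normalClosure {(PresentedGroup.of 0 : PresentedGroup relsGr235) ^ 2}) →*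
      alternatingGroup (Fin 5) :=
  QuotientGroup.lift _ (PresentedGroup.toGroup permGen_rels) (by
    have : Subgroup.normalClosure {(PresentedGroup.of 0 : PresentedGroup relsGr235) ^ 2} ≤
        (PresentedGroup.toGroup permGen_rels).ker := by
      apply Subgroup.normalClosure_le_normal
      rintro _ rfl
      simp [MonoidHom.mem_ker, permGen, permA_sq]
    exact this)

lemma toA5_of (i : Fin 3) :
    toA5 (QuotientGroup.mk (PresentedGroup.of i)) = permGen i := by
  simp [toA5]

lemma toA5_surjective : Function.Surjective toA5 := by
  rw [← MonoidHom.range_eq_top]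
  refine eq_top_of_orders _ (x := permGen 0) (y := permGen 1) (z := permGen 2)
    ⟨_, toA5_of 0⟩ ⟨_, toA5_of 1⟩ ⟨_, toA5_of 2⟩ ?_ ?_ ?_
  · exact orderOf_eq_prime permA_sq (by decide)
  · exact orderOf_eq_prime (by simp [permGen, -mul_inv_rev, permC_permA_pow]) (by decide)
  · exact @orderOf_eq_prime _ _ _ _ ⟨by norm_num⟩ permC_pow (by decide)

/-! ### The bound on the order of the quotient -/

/-- The quotient has at most 60 elements, being exhausted by the normal forms in `a` and `c`. -/
lemma quotient_normalForm_surjective :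
    Function.Surjective (normalForm
      (QuotientGroup.mk (PresentedGroup.of 0) : PresentedGroup relsGr235 ⧸
        Subgroup.normalClosure {(PresentedGroup.of 0 : PresentedGroup relsGr235) ^ 2})
      (QuotientGroup.mk (PresentedGroup.of 2))) := by
  set N := Subgroup.normalClosure {(PresentedGroup.of 0 : PresentedGroup relsGr235) ^ 2}
  let φ : FreeGroup (Fin 3) →* PresentedGroup relsGr235 ⧸ N :=
    (QuotientGroup.mk' N).comp (PresentedGroup.mk relsGr235)
  have hφ : Function.Surjective φ :=
    (QuotientGroup.mk'_surjective N).comp (PresentedGroup.mk_surjective _)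
  have hr : ∀ r ∈ relsGr235, φ r = 1 := fun r hr => by
    have : PresentedGroup.mk relsGr235 r = 1 := PresentedGroup.one_of_mem hr
    simp [φ, this]
  have ha2 : φ (FreeGroup.of 0) ^ 2 = 1 := by
    have h : QuotientGroup.mk' N (PresentedGroup.of 0 ^ 2) = 1 :=
      (QuotientGroup.eq_one_iff _).2 (Subgroup.subset_normalClosure rfl)
    rwa [map_pow] at h
  have h1 := hr (FreeGroup.of 0 ^ 2 * (FreeGroup.of 1 ^ 3)⁻¹) (by simp [relsGr235])
  have h2 := hr (FreeGroup.of 1 ^ 3 * (FreeGroup.of 2 ^ 5)⁻¹) (by simp [relsGr235])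
  have h3 := hr (FreeGroup.of 2 ^ 5 * (FreeGroup.of 0 * FreeGroup.of 1 * FreeGroup.of 2)⁻¹)
    (by simp [relsGr235])
  simp only [map_mul, map_inv, map_pow, mul_inv_eq_one] at h1 h2 h3
  change Function.Surjective (normalForm (φ (FreeGroup.of 0)) (φ (FreeGroup.of 2)))
  have hgen : Subgroup.closure (φ '' Set.range FreeGroup.of) = ⊤ := by
    rw [← MonoidHom.map_closure, FreeGroup.closure_range_of, ← MonoidHom.range_eq_map,
      MonoidHom.range_eq_top.2 hφ]
  have hgen' : ∀ H : Subgroup (PresentedGroup relsGr235 ⧸ N),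
      (∀ i, φ (FreeGroup.of i) ∈ H) → H = ⊤ := by
    intro H hH
    rw [eq_top_iff, ← hgen, Subgroup.closure_le]
    rintro _ ⟨_, ⟨i, rfl⟩, rfl⟩
    exact hH i
  have hb3 : φ (FreeGroup.of 1) ^ 3 = 1 := h1 ▸ ha2
  have hc5 : φ (FreeGroup.of 2) ^ 5 = 1 := h2 ▸ hb3
  have ha : φ (FreeGroup.of 0) * φ (FreeGroup.of 0) = 1 := by rw [← pow_two, ha2]
  rw [hc5] at h3
  -- `abc = 1` gives `b = (ca)⁻¹`
  have hb : φ (FreeGroup.of 1) = (φ (FreeGroup.of 2) * φ (FreeGroup.of 0))⁻¹ := by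
    rw [mul_inv_rev, eq_mul_inv_iff_mul_eq]
    apply eq_inv_of_mul_eq_one_right
    rw [← mul_assoc, ← h3]
  refine normalForm_surjective hc5 ha ?_ (hgen' _ ?_)
  · rw [hb, inv_pow, inv_eq_one] at hb3
    rw [← hb3, pow_succ (_ * _) 2, pow_succ (_ * _) 1, pow_one]
  · have m0 : φ (FreeGroup.of 0) ∈ Subgroup.closure {φ (FreeGroup.of 0), φ (FreeGroup.of 2)} :=
      Subgroup.subset_closure (by simp)
    have m2 : φ (FreeGroup.of 2) ∈ Subgroup.closure {φ (FreeGroup.of 0), φ (FreeGroup.of 2)} :=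
      Subgroup.subset_closure (by simp)
    intro i
    fin_cases i
    · exact m0
    · change φ (FreeGroup.of 1) ∈ _
      rw [hb]
      exact inv_mem (mul_mem m2 m0)
    · exact m2

/-- The quotient of `Gr⟨2,3,5⟩` by the normal closure of `a²` is isomorphic to
the alternating group `A₅`. -/
theorem stmt_7 :
    Nonempty
      ((PresentedGroup relsGr235 ⧸
          Subgroup.normalClosure {(PresentedGroup.of 0 : PresentedGroup relsGr235) ^ 2}) ≃*
        alternatingGroup (Fin 5)) := by
  have hs := quotient_normalForm_surjective
  have := Finite.of_surjective _ hs
  have hcard := Nat.card_le_card_of_surjective _ hs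
  refine ⟨MulEquiv.ofBijective toA5 (Function.Surjective.bijective_of_nat_card_le
    toA5_surjective ?_)⟩
  rw [card_alternatingGroup_five]
  simpa [Nat.card_eq_fintype_card] using hcard
end

section
/- Let p, q be positive integers with gcd(p, q) = 1. The toric link group T_{p,q} = ⟨a, b ∣ aᵖ = b^q⟩ is linear: there exist a field F, a natural number n, and an injective group homomorphism from T_{p,q} into GL(n, F). -/
/-!
Write `z = aᵖ = b^q`. It is central in `T_{p,q}`, and `T_{p,q} / ⟨z⟩` is the free product
`ℤ/p * ℤ/q`; moreover the homomorphism `T_{p,q} → ℤ` with `a ↦ q`, `b ↦ p` sends `z` to `pq ≠ 0`, so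
it is injective on `⟨z⟩`. Hence `T_{p,q}` embeds into `(ℤ/p * ℤ/q) × ℤ`
(`mem_zpowers_of_toFree_eq_one`, `height`).

The free product acts on `ℂ[X]²`: for roots of unity `α` of order dividing `p`, resp. `q`, the two
factors act by the matrices `(α, X(α - 1); 0, 1)` and `(1, 0; X(α - 1), α)`, which are multiplicative
in `α`. If the degree of one coordinate of a vector dominates, a nontrivial element of the
factor attached to the other coordinate raises the maximal degree by exactly one and makes the other
coordinate dominate (`letter_mulVec`). Therefore a nonempty reduced word, applied to a suitable
standard basis vector, yields a vector of positive degree, and so no nontrivial element acts as a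
constant scalar (`eq_one_of_freeRep_eq_scalar`). Tracking degrees in this way, rather than only
disjointness of the ping-pong sets, also covers the small factors `p, q ≤ 2`.

Since the free product meets the constant scalars trivially, the factor `ℤ` can be realised in the
same dimension by the scalars `2ⁿ`. This gives an embedding into `GL₂(ℂ[X]) ≤ GL₂(ℂ(X))`.
-/

/-- Relator of the toric link group `T_{p,q} = ⟨a, b ∣ aᵖ = b^q⟩`, with `a = 0`, `b = 1`. -/
def toricRels (p q : ℕ) : Set (FreeGroup (Fin 2)) :=
  {FreeGroup.of 0 ^ p * (FreeGroup.of 1 ^ q)⁻¹}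

open Polynomial

namespace ToricLink

/-! ### A ping-pong family in `GL₂(ℂ[X])` -/

/-- The affine-type action of the scalars `ℂˣ` on `ℂ[X]²` indexed by a coordinate `i`: the
coordinate `i` of a vector `v` becomes `α * v i + (α - 1) * X * v j`, where `j` is the other
coordinate, and `v j` is unchanged. -/
noncomputable def letter : Fin 2 → ℂˣ →* Matrix (Fin 2) (Fin 2) ℂ[X] :=
  ![{ toFun := fun α => !![C (α : ℂ), X * (C (α : ℂ) - 1); 0, 1]
      map_one' := by simp [Matrix.one_fin_two]
      map_mul' := fun α β => by
        ext1 i j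
        fin_cases i <;> fin_cases j <;> simp [Matrix.mul_apply, Fin.sum_univ_two, -mul_eq_mul_left_iff]
        ring },
    { toFun := fun α => !![1, 0; X * (C (α : ℂ) - 1), C (α : ℂ)]
      map_one' := by simp [Matrix.one_fin_two]
      map_mul' := fun α β => by
        ext1 i j
        fin_cases i <;> fin_cases j <;> simp [Matrix.mul_apply, Fin.sum_univ_two, -mul_eq_mul_left_iff]
        ring }]

/-- The ping-pong sets: vectors in `ℂ[X]²` whose `k`-th coordinate has strictly larger degree than
the other one, and degree at least `n`. -/
def Dom (k : Fin 2) (n : ℕ) (v : Fin 2 → ℂ[X]) : Prop :=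
  (∀ l, l ≠ k → (v l).degree < (v k).degree) ∧ (n : WithBot ℕ) ≤ (v k).degree

lemma degree_step (α : ℂˣ) (hα : α ≠ 1) {f g : ℂ[X]} (h : f.degree < g.degree) :
    (C (α : ℂ) * f + X * (C (α : ℂ) - 1) * g).degree = g.degree + 1 := by
  have hc : (α : ℂ) - 1 ≠ 0 := sub_ne_zero.2 (by simpa using hα)
  have h2 : (X * (C (α : ℂ) - 1) * g).degree = g.degree + 1 := by
    have : (C (α : ℂ) - 1 : ℂ[X]) = C ((α : ℂ) - 1) := by simp
    rw [this, degree_mul, degree_mul, degree_X, degree_C hc, add_zero, add_comm]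
  rw [degree_add_eq_right_of_degree_lt, h2]
  rw [h2, degree_mul, degree_C α.ne_zero, zero_add]
  refine h.trans_le ?_
  exact le_add_of_nonneg_right zero_le_one

lemma degree_lt_add_one {f g : ℂ[X]} (h : f.degree < g.degree) : g.degree < g.degree + 1 := by
  have hg : g ≠ 0 := by rintro rfl; simp at h
  rw [degree_eq_natDegree hg]
  exact_mod_cast Nat.lt_succ_self _

lemma letter_mulVec {i k : Fin 2} (hik : i ≠ k) (α : ℂˣ) (hα : α ≠ 1) {n : ℕ} {v : Fin 2 → ℂ[X]}
    (hv : Dom k n v) : Dom i (n + 1) ((letter i α).mulVec v) := by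
  obtain ⟨h1, h2⟩ := hv
  have h3 := h1 i hik
  have h4 := degree_step α hα h3
  have h5 := degree_lt_add_one h3
  have h6 : ((n + 1 : ℕ) : WithBot ℕ) ≤ (v k).degree + 1 := by
    push_cast
    gcongr
  fin_cases i <;> fin_cases k
  · exact absurd rfl hik
  · simp only [Fin.zero_eta, Fin.mk_one, Fin.isValue] at *
    refine ⟨fun l hl => ?_, ?_⟩
    · obtain rfl : l = 1 := by omega
      simpa [letter, Matrix.mulVec, Matrix.vecHead, Matrix.vecTail, h4] using h5
    · simpa [letter, Matrix.mulVec, Matrix.vecHead, Matrix.vecTail, h4] using h6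
  · simp only [Fin.zero_eta, Fin.mk_one, Fin.isValue] at *
    rw [add_comm] at h4
    refine ⟨fun l hl => ?_, ?_⟩
    · obtain rfl : l = 0 := by omega
      simpa [letter, Matrix.mulVec, Matrix.vecHead, Matrix.vecTail, h4] using h5
    · simpa [letter, Matrix.mulVec, Matrix.vecHead, Matrix.vecTail, h4] using h6
  · exact absurd rfl hik

section FreeProduct

variable (n : Fin 2 → ℕ) [∀ i, NeZero (n i)]

/-- The representation of `ℤ/n₀ * ℤ/n₁` on `ℂ[X]²` sending the `i`-th free factor to roots of unity
acting through `letter i`. -/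
noncomputable def freeRep :
    Monoid.CoprodI (fun i => Multiplicative (ZMod (n i))) →* GL (Fin 2) ℂ[X] :=
  Monoid.CoprodI.lift fun i =>
    (letter i).toHomUnits.comp (Circle.toUnits.comp ZMod.toCircle.toMonoidHom)

lemma freeRep_neWord {i j k : Fin 2}
    (w : Monoid.CoprodI.NeWord (fun i => Multiplicative (ZMod (n i))) i j) (hk : j ≠ k) {m : ℕ}
    {v : Fin 2 → ℂ[X]} (hv : Dom k m v) :
    ∃ m' > m, Dom i m' ((freeRep n w.prod : Matrix (Fin 2) (Fin 2) ℂ[X]).mulVec v) := by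
  induction w generalizing k m v with
  | @singleton i x hx =>
    refine ⟨m + 1, by omega, ?_⟩
    simp only [freeRep, Monoid.CoprodI.NeWord.prod_singleton, Monoid.CoprodI.lift_of]
    refine letter_mulVec hk _ ?_ hv
    intro h
    apply hx
    have h' := congrArg Units.val h
    have h'' : ZMod.toCircle (Multiplicative.toAdd x) = ZMod.toCircle (0 : ZMod (n i)) := by
      apply Circle.ext
      simpa using h'
    exact ZMod.injective_toCircle h''
  | append w₁ hne w₂ ih₁ ih₂ =>
    obtain ⟨m₁, hm₁, h₁⟩ := ih₂ hk hv
    obtain ⟨m₂, hm₂, h₂⟩ := ih₁ hne h₁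
    refine ⟨m₂, by omega, ?_⟩
    rwa [Matrix.mulVec_mulVec, ← Units.val_mul, ← map_mul, ← Monoid.CoprodI.NeWord.append_prod] at h₂

/-- Faithfulness modulo constant scalars: a nontrivial word strictly raises the degree of a suitable
constant vector, which multiplication by a constant does not. -/
lemma eq_one_of_freeRep_eq_scalar
    (x : Monoid.CoprodI (fun i => Multiplicative (ZMod (n i)))) (c : ℂ)
    (h : (freeRep n x : Matrix (Fin 2) (Fin 2) ℂ[X]) = algebraMap ℂ _ c) : x = 1 := by
  classical
  by_contra hx
  have hne : Monoid.CoprodI.Word.equiv x ≠ Monoid.CoprodI.Word.empty := by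
    intro h0
    apply hx
    apply Monoid.CoprodI.Word.equiv.injective
    rw [h0]
    rfl
  obtain ⟨i, j, w, hw⟩ := Monoid.CoprodI.NeWord.of_word _ hne
  have hwx : w.prod = x := by
    rw [Monoid.CoprodI.NeWord.prod, hw]
    exact Monoid.CoprodI.Word.equiv.symm_apply_apply x
  obtain ⟨k, hk⟩ : ∃ k : Fin 2, j ≠ k := ⟨j + 1, by omega⟩
  have hv : Dom k 0 (Pi.single k (1 : ℂ[X])) := by
    refine ⟨fun l hl => ?_, ?_⟩ <;> simp [*]
  obtain ⟨m, hm, -, hd⟩ := freeRep_neWord n w hk hv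
  rw [hwx, h] at hd
  have h1 : ((algebraMap ℂ (Matrix (Fin 2) (Fin 2) ℂ[X]) c).mulVec
      (Pi.single k (1 : ℂ[X])) i).degree ≤ 0 := by
    rw [Matrix.mulVec_single_one]
    simp only [Matrix.col_apply, Matrix.algebraMap_matrix_apply]
    split_ifs
    · exact degree_C_le
    · simp
  have := hd.trans h1
  have : m ≤ 0 := by exact_mod_cast this
  omega

end FreeProduct

/-! ### The toric link group -/

section Toric

variable {p q : ℕ}

lemma relation : (PresentedGroup.of 0 : PresentedGroup (toricRels p q)) ^ p = PresentedGroup.of 1 ^ q := by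
  have h : PresentedGroup.mk (toricRels p q) (FreeGroup.of 0 ^ p * (FreeGroup.of 1 ^ q)⁻¹) = 1 :=
    PresentedGroup.one_of_mem rfl
  rw [map_mul, map_inv, map_pow, map_pow, mul_inv_eq_one] at h
  exact h

/-- A pair of elements satisfying the defining relation extends to the toric link group. -/
def homMk {K : Type*} [Group K] (f : Fin 2 → K) (h : f 0 ^ p = f 1 ^ q) : PresentedGroup (toricRels p q) →* K :=
  PresentedGroup.toGroup (f := f) (by
    rintro _ rfl
    simp [h])

@[simp] lemma homMk_of {K : Type*} [Group K] (f : Fin 2 → K) (h : f 0 ^ p = f 1 ^ q) (i : Fin 2) :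
    homMk f h (PresentedGroup.of i : PresentedGroup (toricRels p q)) = f i :=
  PresentedGroup.toGroup.of _

/-- `aᵖ` commutes with both generators, because it is also `b^q`. -/
lemma central (g : PresentedGroup (toricRels p q)) : Commute g (PresentedGroup.of 0 ^ p) := by
  induction g using PresentedGroup.induction_on with
  | _ w =>
  induction w using FreeGroup.induction_on with
  | C1 => simp
  | of i =>
    change Commute (PresentedGroup.of i) _
    fin_cases i
    · exact Commute.self_pow _ _
    · simp only [Fin.mk_one, relation]
      exact Commute.self_pow _ _
  | inv_of i h => simpa using h.inv_left
  | mul x y hx hy => simpa using hx.mul_left hy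

instance zpowers_normal : (Subgroup.zpowers (PresentedGroup.of 0 ^ p : PresentedGroup (toricRels p q))).Normal := by
  constructor
  intro x hx g
  obtain ⟨m, rfl⟩ := hx
  simp only
  rw [((central g).zpow_right m).eq, mul_inv_cancel_right]
  exact ⟨m, rfl⟩

/-- The canonical surjection of the toric link group onto `ℤ/p * ℤ/q`. -/
def toFree : PresentedGroup (toricRels p q) →* Monoid.CoprodI (fun i => Multiplicative (ZMod (![p, q] i))) :=
  homMk (fun i => Monoid.CoprodI.of (i := i) (Multiplicative.ofAdd 1)) (by
    have h : ∀ i, (Monoid.CoprodI.of (M := fun i => Multiplicative (ZMod (![p, q] i))) (i := i)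
        (Multiplicative.ofAdd 1)) ^ (![p, q] i) = 1 := by
      intro i
      rw [← MonoidHom.map_pow, ← ofAdd_nsmul, nsmul_one, ZMod.natCast_self, ofAdd_zero, map_one]
    exact (h 0).trans (h 1).symm)

lemma toFree_of (i : Fin 2) : toFree (PresentedGroup.of i : PresentedGroup (toricRels p q)) =
    Monoid.CoprodI.of (M := fun i => Multiplicative (ZMod (![p, q] i))) (i := i)
      (Multiplicative.ofAdd 1) :=
  homMk_of _ _ i

/-- The kernel of `toFree` is generated by `aᵖ`: modulo `aᵖ` the generators have orders dividing `p`
and `q`, so the quotient map factors through `toFree`. -/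
lemma mem_zpowers_of_toFree_eq_one (g : PresentedGroup (toricRels p q)) (hg : toFree g = 1) :
    g ∈ Subgroup.zpowers (PresentedGroup.of 0 ^ p : PresentedGroup (toricRels p q)) := by
  let N := Subgroup.zpowers (PresentedGroup.of 0 ^ p : PresentedGroup (toricRels p q))
  let π : PresentedGroup (toricRels p q) →* PresentedGroup (toricRels p q) ⧸ N := QuotientGroup.mk' N
  have hπ : ∀ i : Fin 2, π (PresentedGroup.of i) ^ (![p, q] i) = 1 := by
    intro i
    rw [← map_pow]
    apply (QuotientGroup.eq_one_iff _).2
    fin_cases i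
    · exact Subgroup.mem_zpowers _
    · change PresentedGroup.of 1 ^ q ∈ N
      rw [← relation]
      exact Subgroup.mem_zpowers _
  let ψ : Monoid.CoprodI (fun i => Multiplicative (ZMod (![p, q] i))) →* PresentedGroup (toricRels p q) ⧸ N :=
    Monoid.CoprodI.lift fun i => AddMonoidHom.toMultiplicativeLeft
      (ZMod.lift (![p, q] i) ⟨zmultiplesHom (Additive (PresentedGroup (toricRels p q) ⧸ N))
        (Additive.ofMul (π (PresentedGroup.of i))), by
          rw [zmultiplesHom_apply, natCast_zsmul, ← ofMul_pow, hπ, ofMul_one]⟩)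
  have hψ : ψ.comp toFree = π := by
    apply PresentedGroup.ext
    intro i
    have := ZMod.lift_coe (![p, q] i) ⟨zmultiplesHom (Additive (PresentedGroup (toricRels p q) ⧸ N))
        (Additive.ofMul (π (PresentedGroup.of i))), by
          rw [zmultiplesHom_apply, natCast_zsmul, ← ofMul_pow, hπ, ofMul_one]⟩ 1
    rw [MonoidHom.comp_apply, toFree_of, Monoid.CoprodI.lift_of]
    simpa using congrArg Additive.toMul this
  have h1 : π g = 1 := by rw [← hψ, MonoidHom.comp_apply, hg, map_one]
  exact (QuotientGroup.eq_one_iff _).1 h1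

/-- The homomorphism to `ℤ` with `a ↦ q`, `b ↦ p`. -/
def height : PresentedGroup (toricRels p q) →* Multiplicative ℤ :=
  homMk (fun i => Multiplicative.ofAdd ((![q, p] i : ℕ) : ℤ)) (by
    rw [← ofAdd_nsmul, ← ofAdd_nsmul]
    simp [mul_comm])

/-- The constant scalar matrices `2ⁿ`, as a homomorphism from `ℤ`. -/
noncomputable def scal : Multiplicative ℤ →* GL (Fin 2) ℂ[X] :=
  (Units.map (algebraMap ℂ (Matrix (Fin 2) (Fin 2) ℂ[X])).toMonoidHom).comp
    (zpowersHom ℂˣ (Units.mk0 2 two_ne_zero))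

lemma coe_scal (n : Multiplicative ℤ) :
    (scal n : Matrix (Fin 2) (Fin 2) ℂ[X]) = algebraMap ℂ _ ((2 : ℂ) ^ n.toAdd) := by
  have h : (zpowersHom ℂˣ (Units.mk0 (2 : ℂ) two_ne_zero) n : ℂ) = (2 : ℂ) ^ n.toAdd := by
    simp [zpowersHom_apply]
  rw [← h]
  rfl

lemma scal_injective : Function.Injective scal := by
  rw [injective_iff_map_eq_one]
  intro n h
  have h1 := congrArg Units.val h
  rw [coe_scal, Units.val_one, ← map_one (algebraMap ℂ (Matrix (Fin 2) (Fin 2) ℂ[X]))] at h1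
  have h2 := (algebraMap ℂ (Matrix (Fin 2) (Fin 2) ℂ[X])).injective h1
  have h3 := congrArg norm h2
  rw [norm_zpow, norm_one, Complex.norm_ofNat] at h3
  have h4 : n.toAdd = 0 := by
    rwa [zpow_eq_one_iff_right₀ (by norm_num) (by norm_num)] at h3
  exact h4

lemma scal_commute (m : GL (Fin 2) ℂ[X]) (n : Multiplicative ℤ) : Commute m (scal n) := by
  apply Units.ext
  rw [Units.val_mul, Units.val_mul, coe_scal]
  exact (Algebra.commutes _ _).symm

variable [∀ i, NeZero (![p, q] i)]

/-- The faithful representation over `ℂ[X]`: the representation of `ℤ/p * ℤ/q`, twisted by the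
scalars `2 ^ height`. -/
noncomputable def rep : PresentedGroup (toricRels p q) →* GL (Fin 2) ℂ[X] :=
  ((freeRep ![p, q]).noncommCoprod scal fun _ _ => scal_commute _ _).comp (toFree.prod height)

lemma rep_injective (hp : 0 < p) (hq : 0 < q) : Function.Injective (rep (p := p) (q := q)) := by
  rw [injective_iff_map_eq_one]
  intro g hg
  have h1 : freeRep ![p, q] (toFree g) * scal (height g) = 1 := hg
  have h2 : toFree g = 1 := by
    apply eq_one_of_freeRep_eq_scalar _ _ ((2 : ℂ) ^ ((height g)⁻¹).toAdd)
    rw [← coe_scal, map_inv, eq_inv_of_mul_eq_one_left h1]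
  rw [h2, map_one, one_mul] at h1
  have h3 : height g = 1 := scal_injective (by rw [h1, map_one])
  obtain ⟨m, rfl⟩ := mem_zpowers_of_toFree_eq_one g h2
  have h4 : m = 0 := by
    have h5 := congrArg Multiplicative.toAdd h3
    simpa [height, hp.ne', hq.ne'] using h5
  simp [h4]

end Toric

end ToricLink

/-- The toric link group `T_{p,q}` (with `gcd(p,q) = 1`) is linear. -/
theorem stmt_12 (p q : ℕ) (hp : 0 < p) (hq : 0 < q) (hpq : Nat.gcd p q = 1) :
    ∃ (F : Type) (_ : Field F) (n : ℕ)
      (φ : PresentedGroup (toricRels p q) →* Matrix.GeneralLinearGroup (Fin n) F),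
      Function.Injective φ := by
  have : ∀ i, NeZero (![p, q] i) := by
    intro i
    fin_cases i
    · exact ⟨hp.ne'⟩
    · exact ⟨hq.ne'⟩
  refine ⟨RatFunc ℂ, inferInstance, 2,
    (Matrix.GeneralLinearGroup.map (algebraMap ℂ[X] (RatFunc ℂ))).comp ToricLink.rep, ?_⟩
  have h : Function.Injective
      (Matrix.GeneralLinearGroup.map (n := Fin 2) (algebraMap ℂ[X] (RatFunc ℂ))) := fun A B hAB =>
    Units.ext (Matrix.map_injective (IsFractionRing.injective ℂ[X] (RatFunc ℂ))
      (congrArg Units.val hAB))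
  rw [MonoidHom.coe_comp]
  exact h.comp (ToricLink.rep_injective hp hq)
end
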